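/- Fix θ = (μ,σ,1,β) with α = 1 and β ∈ (−1,1), σ > 0, μ ∈ ℝ. Then as |x| → ∞ the second-order parameter derivatives satisfy the improved bounds f_{σσ}(x;θ) = O(|x|^{−3} log|x|) and f_{ββ}(x;θ) = O(|x|^{−3} log|x|). -/

import Mathlib

open MeasureTheory Filter

noncomputable section

def ThetaInt : Set (Fin 4 → ℝ) :=
  {θ | 0 < θ 1 ∧ θ 2 ∈ Set.Ioo (0:ℝ) 2 ∧ θ 3 ∈ Set.Ioo (-1:ℝ) 1}

/-- Cumulant (log characteristic function) of the continuous (M₀) parameterization,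
with `θ = (μ, σ, α, β)`. -/
def psiM (θ : Fin 4 → ℝ) (t : ℝ) : ℂ :=
  if θ 2 = 1 then
    ((-(|θ 1 * t|) : ℝ) : ℂ)
      - Complex.I * (((2 * θ 3 / Real.pi) * (θ 1 * t) * Real.log |θ 1 * t| : ℝ) : ℂ)
      + Complex.I * ((θ 0 * t : ℝ) : ℂ)
  else
    ((-(|θ 1 * t| ^ (θ 2)) : ℝ) : ℂ) *
        (1 + Complex.I * ((θ 3 * Real.sign t * Real.tan (Real.pi * θ 2 / 2)
            * (|θ 1 * t| ^ (1 - θ 2) - 1) : ℝ) : ℂ))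
      + Complex.I * ((θ 0 * t : ℝ) : ℂ)

/-- Characteristic function of the (M₀) parameterization. -/
def phiM (θ : Fin 4 → ℝ) (t : ℝ) : ℂ := Complex.exp (psiM θ t)

/-- Stable density in the (M₀) parameterization, via Fourier inversion. -/
def fM (θ : Fin 4 → ℝ) (x : ℝ) : ℝ :=
  (1 / (2 * Real.pi)) *
    (∫ t : ℝ, Complex.exp (-Complex.I * (t : ℂ) * (x : ℂ)) * phiM θ t).re

/-- Partial derivative of the density in parameter `i`. -/
def fP (i : Fin 4) (θ : Fin 4 → ℝ) (x : ℝ) : ℝ :=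
  deriv (fun s => fM (Function.update θ i s) x) (θ i)

/-- Second partial derivative of the density in parameters `i`, `j`. -/
def fPP (i j : Fin 4) (θ : Fin 4 → ℝ) (x : ℝ) : ℝ :=
  deriv (fun s => fP i (Function.update θ j s) x) (θ j)

/-- Derivative of the density in `x`. -/
def fX (θ : Fin 4 → ℝ) (x : ℝ) : ℝ := deriv (fun y => fM θ y) x

/-- Mixed derivative `∂²f/∂x∂θᵢ`. -/
def fPX (i : Fin 4) (θ : Fin 4 → ℝ) (x : ℝ) : ℝ := deriv (fun y => fP i θ y) x

/-- Score functions. -/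
def ellP (i : Fin 4) (θ : Fin 4 → ℝ) (x : ℝ) : ℝ := fP i θ x / fM θ x

/-- Derivative of the score in `x`. -/
def ellPX (i : Fin 4) (θ : Fin 4 → ℝ) (x : ℝ) : ℝ := deriv (fun y => ellP i θ y) x

/-- Derivative of the score `ℓ_{θᵢ}` in the parameter `θⱼ`. -/
def ellPP (i j : Fin 4) (θ : Fin 4 → ℝ) (x : ℝ) : ℝ :=
  deriv (fun s => ellP i (Function.update θ j s) x) (θ j)

/-- `h = O(r)` as `|x| → ∞`. -/
def IsBigOAtInfty (h r : ℝ → ℝ) : Prop :=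
  ∃ c > 0, ∃ M > 0, ∀ x : ℝ, M ≤ |x| → |h x| ≤ c * r x


end

/-- The analytic function z log z. -/
noncomputable def zlz (z : ℂ) : ℂ := z * Complex.log z

noncomputable def Gf (σ m w p1 p2 q r x : ℝ) (z : ℂ) : ℂ :=
  Complex.exp (-Complex.I * z * x + z * (-σ + Complex.I * m) - Complex.I * w * zlz z) *
    ((z * (p1 + Complex.I * p2) + Complex.I * q * zlz z) ^ 2 + Complex.I * r * z)

theorem zlz_norm_le (z : ℂ) : ‖zlz z‖ ≤ |‖z‖ * Real.log ‖z‖| + ‖z‖ * Real.pi := by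
  unfold zlz
  rw [norm_mul, abs_mul, abs_of_nonneg (norm_nonneg z), ← mul_add]
  gcongr
  have h := Complex.norm_le_abs_re_add_abs_im (Complex.log z)
  rw [Complex.log_re, Complex.log_im] at h
  have := Complex.abs_arg_le_pi z
  linarith

theorem zlz_continuousAt_zero : ContinuousAt zlz 0 := by
  have h0 : zlz 0 = 0 := by simp [zlz]
  unfold ContinuousAt
  rw [h0]
  apply squeeze_zero_norm zlz_norm_le
  have h1 : Continuous (fun z : ℂ => |‖z‖ * Real.log ‖z‖| + ‖z‖ * Real.pi) := by
    have := Real.continuous_mul_log.comp (continuous_norm (E := ℂ))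
    have h2 : Continuous (fun z : ℂ => ‖z‖ * Real.log ‖z‖) := this
    fun_prop
  have := h1.tendsto 0
  simpa using this

theorem zlz_continuousOn : ContinuousOn zlz {z : ℂ | 0 ≤ z.re ∧ z.im ≤ 0} := by
  intro z hz
  apply ContinuousAt.continuousWithinAt
  by_cases h : z = 0
  · rw [h]; exact zlz_continuousAt_zero
  · unfold zlz
    apply ContinuousAt.mul continuousAt_id
    apply continuousAt_clog
    rw [Complex.mem_slitPlane_iff]
    by_contra hc
    push Not at hc
    apply h
    apply Complex.ext
    · simp; linarith [hz.1, hc.1]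
    · simpa using hc.2

theorem Gf_continuousOn (σ m w p1 p2 q r x : ℝ) :
    ContinuousOn (Gf σ m w p1 p2 q r x) {z : ℂ | 0 ≤ z.re ∧ z.im ≤ 0} := by
  unfold Gf
  have := zlz_continuousOn
  fun_prop

theorem Gf_differentiableOn (σ m w p1 p2 q r x : ℝ) :
    DifferentiableOn ℂ (Gf σ m w p1 p2 q r x) {z : ℂ | 0 < z.re} := by
  have : DifferentiableOn ℂ zlz {z : ℂ | 0 < z.re} := by
    unfold zlz
    apply DifferentiableOn.mul differentiableOn_id
    apply DifferentiableOn.clog differentiableOn_id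
    intro z hz
    exact Or.inl hz
  unfold Gf
  fun_prop

theorem one_add_pow_le_exp (δ : ℝ) (hδ : 0 < δ) (n : ℕ) :
    ∃ C > 0, ∀ t : ℝ, 0 ≤ t → (1 + t) ^ n ≤ C * Real.exp (δ * t) := by
  refine ⟨n.factorial / δ ^ n * Real.exp δ, by positivity, fun t ht => ?_⟩
  have h := Real.pow_div_factorial_le_exp (δ * (1 + t)) (by positivity) n
  rw [div_le_iff₀ (by positivity), mul_add, Real.exp_add, ← mul_add, mul_pow, mul_one] at h
  have hd : 0 < δ ^ n := by positivity
  have : (1 + t) ^ n = δ ^ n * (1+t)^n / δ ^ n := by field_simp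
  rw [this, div_le_iff₀ hd]
  calc _ ≤ _ := h
    _ = _ := by field_simp

theorem zlz_far (z : ℂ) (h1 : 1 ≤ ‖z‖) (hre : 0 ≤ z.re) (hi : -1 ≤ z.im) (hi0 : z.im ≤ 0) :
    ‖zlz z‖ ≤ 5 * (1 + z.re) ^ 2 ∧ |(zlz z).im| ≤ 2 + Real.log (1 + z.re) := by
  have hz : ‖z‖ ≤ 1 + z.re := by
    have := Complex.norm_le_abs_re_add_abs_im z
    rw [abs_of_nonneg hre, abs_of_nonpos hi0] at this
    linarith
  have hl0 : 0 ≤ Real.log ‖z‖ := Real.log_nonneg h1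
  have hl : Real.log ‖z‖ ≤ Real.log (1 + z.re) := Real.log_le_log (by linarith) hz
  have hl2 : Real.log (1 + z.re) ≤ z.re := by
    have := Real.log_le_sub_one_of_pos (x := 1 + z.re) (by linarith)
    linarith
  constructor
  · refine (zlz_norm_le z).trans ?_
    rw [abs_of_nonneg (by positivity)]
    have h4 : Real.pi ≤ 4 := Real.pi_le_four
    have : ‖z‖ * Real.log ‖z‖ ≤ (1 + z.re) * z.re := by
      apply mul_le_mul hz (by linarith) hl0 (by linarith)
    have : ‖z‖ * Real.pi ≤ (1 + z.re) * 4 := by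
      apply mul_le_mul hz h4 (by positivity) (by linarith)
    nlinarith
  · have him : (zlz z).im = z.re * z.arg + z.im * Real.log ‖z‖ := by
      simp [zlz, Complex.mul_im, Complex.log_re, Complex.log_im]
    rw [him]
    have ha : |z.re * z.arg| ≤ 2 := by
      have h := Real.mul_abs_le_abs_sin (Complex.abs_arg_le_pi_div_two_iff.2 hre)
      rw [Complex.sin_arg, abs_div, abs_of_nonneg (norm_nonneg z),
        le_div_iff₀ (by linarith)] at h
      have h5 : z.re ≤ ‖z‖ := Complex.re_le_norm z
      have h6 : |z.im| ≤ 1 := abs_le.2 ⟨hi, by linarith⟩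
      have hpi := Real.pi_pos
      have h7 : |z.arg| * ‖z‖ ≤ Real.pi / 2 := by
        have : |z.arg| * ‖z‖ = Real.pi / 2 * (2 / Real.pi * |z.arg| * ‖z‖) := by field_simp
        rw [this]
        nlinarith
      rw [abs_mul, abs_of_nonneg hre]
      have : z.re * |z.arg| ≤ ‖z‖ * |z.arg| := by gcongr
      have := Real.pi_le_four
      linarith
    have hb : |z.im * Real.log ‖z‖| ≤ Real.log (1 + z.re) := by
      rw [abs_mul, abs_of_nonneg hl0]
      have h6 : |z.im| ≤ 1 := abs_le.2 ⟨hi, by linarith⟩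
      nlinarith
    exact (abs_add_le _ _).trans (by linarith)

theorem Gf_far (σ m w p1 p2 q r : ℝ) (hσ : 0 < σ) :
    ∃ C > 0, ∀ x : ℝ, ∀ z : ℂ, 1 ≤ ‖z‖ → 0 ≤ z.re → -1 ≤ z.im → z.im ≤ 0 →
      ‖Gf σ m w p1 p2 q r x z‖ ≤ C * Real.exp (x * z.im) * Real.exp (-(σ / 4) * z.re) := by
  obtain ⟨C1, hC1, H1⟩ := one_add_pow_le_exp (σ / 4) (by positivity) 4
  set A : ℝ := |p1| + |p2| + 5 * |q| with hA
  set η : ℝ := σ / (2 * (|w| + 1)) with hη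
  have hηp : 0 < η := by positivity
  set B : ℝ := |m| + |w| * 2 + |w| * η + |w| * |Real.log η| with hB
  have hA0 : 0 ≤ A := by positivity
  refine ⟨Real.exp B * ((A ^ 2 + |r| + 1) * C1), by positivity, fun x z h1 hre hi hi0 => ?_⟩
  obtain ⟨hk, hkim⟩ := zlz_far z h1 hre hi hi0
  have hz : ‖z‖ ≤ 1 + z.re := by
    have := Complex.norm_le_abs_re_add_abs_im z
    rw [abs_of_nonneg hre, abs_of_nonpos hi0] at this
    linarith
  have hone : 1 ≤ 1 + z.re := by linarith
  have hQ : ‖(z * (p1 + Complex.I * p2) + Complex.I * q * zlz z) ^ 2 + Complex.I * r * z‖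
      ≤ (A ^ 2 + |r| + 1) * (C1 * Real.exp (σ / 4 * z.re)) := by
    have e1 : ‖z * (p1 + Complex.I * p2) + Complex.I * q * zlz z‖ ≤ A * (1 + z.re) ^ 2 := by
      calc _ ≤ ‖z‖ * (|p1| + |p2|) + |q| * ‖zlz z‖ := by
            refine (norm_add_le _ _).trans ?_
            rw [norm_mul, norm_mul, norm_mul]
            simp only [Complex.norm_I, one_mul, Complex.norm_real, Real.norm_eq_abs]
            gcongr
            refine (norm_add_le _ _).trans ?_
            simp
        _ ≤ (1 + z.re) ^ 2 * (|p1| + |p2|) + |q| * (5 * (1 + z.re) ^ 2) := by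
            gcongr
            nlinarith
        _ = _ := by rw [hA]; ring
    calc _ ≤ (A * (1 + z.re) ^ 2) ^ 2 + |r| * (1 + z.re) ^ 4 := by
          refine (norm_add_le _ _).trans ?_
          rw [norm_pow, norm_mul, norm_mul]
          simp only [Complex.norm_I, one_mul, Complex.norm_real, Real.norm_eq_abs]
          gcongr
          exact hz.trans (le_self_pow₀ hone (by norm_num))
      _ = (A ^ 2 + |r|) * (1 + z.re) ^ 4 := by ring
      _ ≤ (A ^ 2 + |r| + 1) * (1 + z.re) ^ 4 :=
          mul_le_mul_of_nonneg_right (by linarith) (by positivity)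
      _ ≤ _ := by gcongr; exact H1 _ hre
  have hE : ‖Complex.exp (-Complex.I * z * x + z * (-σ + Complex.I * m) - Complex.I * w * zlz z)‖
      ≤ Real.exp B * Real.exp (x * z.im) * Real.exp (-(σ / 2) * z.re) := by
    rw [Complex.norm_exp, ← Real.exp_add, ← Real.exp_add]
    apply Real.exp_le_exp.2
    have : (-Complex.I * z * x + z * (-σ + Complex.I * m) - Complex.I * w * zlz z).re
      = x * z.im - σ * z.re - m * z.im + w * (zlz z).im := by
      simp; ring
    rw [this]
    have a1 : - m * z.im ≤ |m| := by
      refine (le_abs_self _).trans ?_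
      rw [abs_mul, abs_neg]
      have h6 : |z.im| ≤ 1 := abs_le.2 ⟨hi, by linarith⟩
      nlinarith [abs_nonneg m]
    have a2 : w * (zlz z).im ≤ |w| * (2 + Real.log (1 + z.re)) := by
      refine (le_abs_self _).trans ?_
      rw [abs_mul]
      gcongr
    have a3 : Real.log (1 + z.re) ≤ η * (1 + z.re) + |Real.log η| := by
      have := Real.log_le_sub_one_of_pos (x := η * (1 + z.re)) (by positivity)
      rw [Real.log_mul (by positivity) (by positivity)] at this
      linarith [neg_abs_le (Real.log η)]
    have a4 : |w| * Real.log (1 + z.re) ≤ |w| * (η * (1 + z.re) + |Real.log η|) := by gcongr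
    have a5 : |w| * η ≤ σ / 2 := by
      rw [hη, mul_div_assoc', div_le_iff₀ (by positivity)]
      nlinarith [abs_nonneg w]
    have a6 : |w| * η * z.re ≤ σ / 2 * z.re := by gcongr
    rw [hB]
    nlinarith
  unfold Gf
  rw [norm_mul]
  calc _ ≤ (Real.exp B * Real.exp (x * z.im) * Real.exp (-(σ / 2) * z.re)) *
        ((A ^ 2 + |r| + 1) * (C1 * Real.exp (σ / 4 * z.re))) := by gcongr
    _ = Real.exp B * ((A ^ 2 + |r| + 1) * C1) * Real.exp (x * z.im) *
        (Real.exp (-(σ / 2) * z.re) * Real.exp (σ / 4 * z.re)) := by ring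
    _ = _ := by
      rw [← Real.exp_add]; ring_nf

theorem zlz_seg (u : ℝ) (hu : 0 < u) :
    zlz (-Complex.I * u) = ((-(u * Real.pi / 2) : ℝ) : ℂ) - Complex.I * ((u * Real.log u : ℝ) : ℂ) := by
  unfold zlz
  rw [Complex.log_mul_ofReal u hu _ (by simp), Complex.log_neg_I]
  push_cast
  ring_nf
  simp
  ring

set_option maxHeartbeats 1000000 in
theorem Gf_seg (σ m w p1 p2 q r : ℝ) :
    ∃ C > 0, ∀ x u : ℝ, 0 < u → u ≤ 1 →
      |(Gf σ m w p1 p2 q r x (-Complex.I * u)).im| ≤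
        C * Real.exp (-(u * x)) * (u ^ 2 * (1 + |Real.log u|)) := by
  set S : ℝ := p1 + q * Real.pi / 2 with hS
  set κ : ℝ := σ + w * Real.pi / 2 with hκ
  set T : ℝ := |p2| + |q| with hT
  have hT0 : 0 ≤ T := by positivity
  refine ⟨Real.exp (|m| + |w|) * (2 * |S| * T + |κ| * (T * T + S ^ 2 + |r|) + 1),
    by positivity, fun x u hu hu1 => ?_⟩
  set L := Real.log u with hL
  have hLu : |u * L| ≤ 1 := by
    rw [mul_comm]; exact (Real.abs_log_mul_self_lt u hu hu1).le
  set P : ℝ := p2 + q * L with hP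
  have hG : Gf σ m w p1 p2 q r x (-Complex.I * u) =
      Complex.exp (((-(u * x) + m * u - w * (u * L) : ℝ) : ℂ) + ((u * κ : ℝ) : ℂ) * Complex.I) *
      (((u ^ 2 * (P ^ 2 - S ^ 2) + r * u : ℝ) : ℂ) + ((-2 * u ^ 2 * P * S : ℝ) : ℂ) * Complex.I) := by
    unfold Gf
    rw [zlz_seg u hu]
    congr 1
    · congr 1
      rw [hκ]
      push_cast
      ring_nf
      simp only [Complex.I_sq]
      ring
    · rw [hP, hS]
      push_cast
      ring_nf
      simp only [Complex.I_sq, Complex.I_pow_four, Complex.I_pow_three, ← hL]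
      ring_nf
  have him : (Gf σ m w p1 p2 q r x (-Complex.I * u)).im =
      Real.exp (-(u * x) + m * u - w * (u * L)) * (Real.cos (u * κ) * (-2 * u ^ 2 * P * S)
       + Real.sin (u * κ) * (u ^ 2 * (P ^ 2 - S ^ 2) + r * u)) := by
    rw [hG, Complex.exp_add, Complex.exp_mul_I, ← Complex.ofReal_exp, ← Complex.ofReal_cos,
      ← Complex.ofReal_sin]
    simp [-Complex.ofReal_exp, -Complex.ofReal_cos, -Complex.ofReal_sin, -Complex.ofReal_add,
      -Complex.ofReal_mul, -Complex.ofReal_sub, -Complex.ofReal_neg, -Complex.ofReal_pow]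
    ring
  rw [him, abs_mul, abs_of_pos (Real.exp_pos _)]
  have e1 : Real.exp (-(u * x) + m * u - w * (u * L)) ≤ Real.exp (|m| + |w|) * Real.exp (-(u*x)) := by
    rw [← Real.exp_add]
    apply Real.exp_le_exp.2
    have b1 : m * u ≤ |m| := by
      have := le_abs_self m
      nlinarith [abs_nonneg m]
    have b2 : -(w * (u * L)) ≤ |w| := by
      refine (neg_le_abs _).trans ?_
      rw [abs_mul]
      nlinarith [abs_nonneg w]
    linarith
  have hPb : |P| ≤ T * (1 + |L|) := by
    refine (abs_add_le _ _).trans ?_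
    rw [abs_mul, hT]
    nlinarith [abs_nonneg p2, abs_nonneg q, abs_nonneg L, mul_nonneg (abs_nonneg p2) (abs_nonneg L)]
  have hPu : u * |P| ≤ T := by
    have : |P| ≤ |p2| + |q| * |L| := by
      refine (abs_add_le _ _).trans ?_
      rw [abs_mul]
    rw [abs_mul, abs_of_pos hu] at hLu
    have h2 : u * |P| ≤ u * (|p2| + |q| * |L|) := by gcongr
    nlinarith [abs_nonneg p2, abs_nonneg q]
  have e2 : |Real.cos (u * κ) * (-2 * u ^ 2 * P * S)
       + Real.sin (u * κ) * (u ^ 2 * (P ^ 2 - S ^ 2) + r * u)| ≤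
      (2 * |S| * T + |κ| * (T * T + S ^ 2 + |r|) + 1) * (u ^ 2 * (1 + |L|)) := by
    refine (abs_add_le _ _).trans ?_
    rw [abs_mul, abs_mul (Real.sin _)]
    have c1 : |Real.cos (u * κ)| ≤ 1 := Real.abs_cos_le_one _
    have c2 : |Real.sin (u * κ)| ≤ u * |κ| := by
      have := Real.abs_sin_le_abs (x := u * κ)
      rwa [abs_mul, abs_of_pos hu] at this
    have c3 : |-2 * u ^ 2 * P * S| ≤ 2 * u ^ 2 * (T * (1 + |L|)) * |S| := by
      rw [abs_mul, abs_mul, abs_mul]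
      simp only [abs_neg, abs_two, abs_pow, sq_abs]
      gcongr
    have c4 : |u ^ 2 * (P ^ 2 - S ^ 2) + r * u| ≤ u * ((T * T + S ^ 2 + |r|) * (1 + |L|)) := by
      have d1 : |u ^ 2 * (P ^ 2 - S ^ 2) + r * u| ≤ u * ((u * |P|) * |P|  + u * S ^ 2 + |r|) := by
        rw [show u ^ 2 * (P ^ 2 - S ^ 2) + r * u = u * ((u * P) * P - u * S ^ 2 + r) by ring,
          abs_mul, abs_of_pos hu]
        gcongr
        refine (abs_add_le _ _).trans ?_
        gcongr
        refine (abs_sub _ _).trans ?_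
        rw [abs_mul, abs_mul, abs_mul, abs_of_pos hu, abs_of_nonneg (sq_nonneg S)]
      refine d1.trans ?_
      gcongr
      have d2 : (u * |P|) * |P| ≤ T * (T * (1 + |L|)) := by gcongr
      have d3 : u * S ^ 2 ≤ S ^ 2 := by nlinarith [sq_nonneg S]
      nlinarith [mul_nonneg (sq_nonneg S) (abs_nonneg L), mul_nonneg (abs_nonneg r) (abs_nonneg L)]
    have hz : 0 ≤ u ^ 2 * (1 + |L|) := by positivity
    calc _ ≤ 1 * (2 * u ^ 2 * (T * (1 + |L|)) * |S|) + (u * |κ|) *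
            (u * ((T * T + S ^ 2 + |r|) * (1 + |L|))) := by gcongr
      _ = (2 * |S| * T + |κ| * (T * T + S ^ 2 + |r|)) * (u ^ 2 * (1 + |L|)) := by ring
      _ ≤ _ := mul_le_mul_of_nonneg_right (by linarith) hz
  calc _ ≤ (Real.exp (|m| + |w|) * Real.exp (-(u*x))) * _ := mul_le_mul e1 e2 (abs_nonneg _) (by positivity)
    _ = _ := by ring

theorem seg_pointwise (x u : ℝ) (hx : Real.exp 1 ≤ x) (hu : 0 < u) :
    Real.exp (-(u * x)) * (u ^ 2 * (1 + |Real.log u|)) ≤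
      66 * (Real.log x / x ^ 2) * Real.exp (-(x / 2) * u) := by
  have hx0 : 0 < x := (Real.exp_pos 1).trans_le hx
  have hlx : 1 ≤ Real.log x := by
    rw [Real.le_log_iff_exp_le hx0]; exact hx
  set v := u * x with hv
  have hv0 : 0 < v := by positivity
  have hlog : |Real.log u| ≤ |Real.log v| + Real.log x := by
    have : Real.log u = Real.log v - Real.log x := by
      rw [hv, Real.log_mul hu.ne' hx0.ne']; ring
    rw [this]
    refine (abs_sub _ _).trans ?_
    rw [abs_of_nonneg (by linarith : 0 ≤ Real.log x)]
  have hlv : |Real.log v| ≤ v + v⁻¹ := by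
    have h1 := Real.log_le_sub_one_of_pos hv0
    have h2 := Real.log_le_sub_one_of_pos (inv_pos.2 hv0)
    rw [Real.log_inv] at h2
    have h3 : 0 < v⁻¹ := inv_pos.2 hv0
    rw [abs_le]; constructor <;> linarith
  have g1 : v ≤ 2 * Real.exp (v / 2) := by
    have := Real.pow_div_factorial_le_exp (v / 2) (by positivity) 1
    norm_num [Nat.factorial] at this
    linarith
  have g2 : v ^ 2 ≤ 8 * Real.exp (v / 2) := by
    have := Real.pow_div_factorial_le_exp (v / 2) (by positivity) 2
    norm_num [Nat.factorial] at this
    linarith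
  have g3 : v ^ 3 ≤ 48 * Real.exp (v / 2) := by
    have := Real.pow_div_factorial_le_exp (v / 2) (by positivity) 3
    norm_num [Nat.factorial] at this
    linarith
  have hE := Real.exp_pos (v / 2)
  have key : v ^ 2 * (1 + |Real.log u|) ≤ 66 * Real.log x * Real.exp (v / 2) := by
    calc v ^ 2 * (1 + |Real.log u|) ≤ v ^ 2 * (1 + ((v + v⁻¹) + Real.log x)) := by
          gcongr; linarith
      _ = v ^ 2 * (1 + Real.log x) + v ^ 3 + v := by field_simp; ring
      _ ≤ 8 * Real.exp (v / 2) * (1 + Real.log x) + 48 * Real.exp (v/2) + 2 * Real.exp (v/2) := by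
          gcongr
      _ ≤ _ := by nlinarith
  have hu2 : u ^ 2 = v ^ 2 / x ^ 2 := by rw [hv]; field_simp
  rw [hu2]
  calc Real.exp (-v) * (v ^ 2 / x ^ 2 * (1 + |Real.log u|))
      = Real.exp (-v) / x ^ 2 * (v ^ 2 * (1 + |Real.log u|)) := by ring
    _ ≤ Real.exp (-v) / x ^ 2 * (66 * Real.log x * Real.exp (v / 2)) := by gcongr
    _ = 66 * (Real.log x / x ^ 2) * (Real.exp (-v) * Real.exp (v / 2)) := by ring
    _ = _ := by rw [← Real.exp_add, hv]; ring_nf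

theorem exp_interval (a : ℝ) (ha : 0 < a) (R : ℝ) (hR : 0 ≤ R) :
    ∫ t in (0:ℝ)..R, Real.exp (-a * t) ≤ 1 / a := by
  rw [intervalIntegral.integral_of_le hR]
  calc _ ≤ ∫ t in Set.Ioi (0:ℝ), Real.exp (-a * t) := by
        apply MeasureTheory.setIntegral_mono_set (integrableOn_exp_mul_Ioi (by linarith) 0)
        · exact Filter.Eventually.of_forall fun t => (Real.exp_pos _).le
        · exact Filter.Eventually.of_forall fun t ht => ht.1
    _ = _ := by rw [integral_exp_mul_Ioi (by linarith)]; simp [neg_div_neg_eq]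

theorem Gf_rect (σ m w p1 p2 q r x R : ℝ) (hR : 0 < R) :
    (∫ t in (0:ℝ)..R, Gf σ m w p1 p2 q r x t) =
      (∫ t in (0:ℝ)..R, Gf σ m w p1 p2 q r x (t - Complex.I)) +
      Complex.I * (∫ y in (0:ℝ)..1, Gf σ m w p1 p2 q r x (R - Complex.I * y)) -
      Complex.I * (∫ y in (0:ℝ)..1, Gf σ m w p1 p2 q r x (-Complex.I * y)) := by
  have h := Complex.integral_boundary_rect_eq_zero_of_continuousOn_of_differentiableOn
    (Gf σ m w p1 p2 q r x) (-Complex.I) R ?_ ?_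
  · simp only [Complex.neg_re, Complex.I_re, neg_zero, Complex.ofReal_re, Complex.neg_im,
      Complex.I_im, Complex.ofReal_im, Complex.ofReal_zero, zero_mul, add_zero, zero_add,
      smul_eq_mul, Complex.ofReal_neg, Complex.ofReal_one, neg_mul, one_mul, ← sub_eq_add_neg] at h
    have e1 : ∀ f : ℝ → ℂ, ∫ y in (-1:ℝ)..0, f y = ∫ y in (0:ℝ)..1, f (-y) := by
      intro f
      rw [intervalIntegral.integral_comp_neg]; simp
    rw [e1, e1] at h
    simp only [Complex.ofReal_neg, neg_mul, ← sub_eq_add_neg] at h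
    simp only [mul_comm (Complex.I) (Complex.ofReal _), neg_mul]
    linear_combination -h
  · apply (Gf_continuousOn σ m w p1 p2 q r x).mono
    intro z hz
    rw [Complex.mem_reProdIm] at hz
    simp [hR.le] at hz
    constructor
    · exact hz.1.1
    · exact hz.2.2
  · apply (Gf_differentiableOn σ m w p1 p2 q r x).mono
    intro z hz
    rw [Complex.mem_reProdIm] at hz
    have := hz.1.1
    simpa [hR.le] using this

theorem Gf_tail (σ m w p1 p2 q r : ℝ) (hσ : 0 < σ) :
    ∃ C > 0, ∀ x : ℝ, Real.exp 1 ≤ x →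
      |(∫ t in Set.Ioi (0:ℝ), Gf σ m w p1 p2 q r x t).re| ≤ C * (Real.log x / x ^ 3) := by
  obtain ⟨C1, hC1, H1⟩ := Gf_far σ m w p1 p2 q r hσ
  obtain ⟨C2, hC2, H2⟩ := Gf_seg σ m w p1 p2 q r
  refine ⟨C1 * (4 / σ) * 6 + C2 * 132, by positivity, fun x hx => ?_⟩
  have hx0 : 0 < x := (Real.exp_pos 1).trans_le hx
  have hlx : 1 ≤ Real.log x := by
    rw [Real.le_log_iff_exp_le hx0]; exact hx
  by_cases hint : MeasureTheory.IntegrableOn (fun t : ℝ => Gf σ m w p1 p2 q r x t) (Set.Ioi 0)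
  swap
  · rw [MeasureTheory.integral_undef hint]
    simp; positivity
  have hlim := MeasureTheory.intervalIntegral_tendsto_integral_Ioi 0 hint Filter.tendsto_id
  have hlim2 := (continuous_abs.comp Complex.continuous_re).continuousAt.tendsto.comp hlim
  have hlim3 : Filter.Tendsto (fun R : ℝ => C1 * (4 / σ) * Real.exp (-x) + C1 * Real.exp (-(σ / 4) * R) +
      C2 * 132 * (Real.log x / x ^ 3)) Filter.atTop
      (nhds (C1 * (4 / σ) * Real.exp (-x) + C1 * 0 + C2 * 132 * (Real.log x / x ^ 3))) := by
    refine (Filter.Tendsto.add tendsto_const_nhds (Filter.Tendsto.const_mul _ ?_)).add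
      tendsto_const_nhds
    apply Real.tendsto_exp_atBot.comp
    exact Filter.tendsto_id.const_mul_atTop_of_neg (by linarith)
  have hfin := le_of_tendsto_of_tendsto hlim2 hlim3 ?_
  · refine hfin.trans ?_
    have : Real.exp (-x) ≤ 6 * (Real.log x / x ^ 3) := by
      have h3 := Real.pow_div_factorial_le_exp x hx0.le 3
      norm_num [Nat.factorial] at h3
      rw [Real.exp_neg]
      calc (Real.exp x)⁻¹ ≤ (x ^ 3 / 6)⁻¹ := by gcongr
        _ = 6 * (1 / x ^ 3) := by field_simp
        _ ≤ _ := by gcongr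
    have h4 : C1 * (4 / σ) * Real.exp (-x) ≤ C1 * (4 / σ) * (6 * (Real.log x / x ^ 3)) := by
      gcongr
    linarith
  · filter_upwards [Filter.eventually_ge_atTop (1:ℝ)] with R hR
    have hR0 : 0 < R := by linarith
    simp only [Function.comp, id]
    rw [Gf_rect _ _ _ _ _ _ _ _ _ hR0]
    have b1 : ‖∫ t in (0:ℝ)..R, Gf σ m w p1 p2 q r x (t - Complex.I)‖ ≤
        C1 * (4 / σ) * Real.exp (-x) := by
      calc _ ≤ ∫ t in (0:ℝ)..R, C1 * Real.exp (-x) * Real.exp (-(σ / 4) * t) := by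
            apply intervalIntegral.norm_integral_le_of_norm_le hR0.le
            · refine Filter.Eventually.of_forall fun t ht => ?_
              have := H1 x (t - Complex.I) ?_ ?_ ?_ ?_
              · simpa using this
              · have := Complex.abs_im_le_norm (t - Complex.I)
                simpa using this
              · simpa using ht.1.le
              · simp
              · simp
            · apply Continuous.intervalIntegrable
              fun_prop
        _ ≤ C1 * Real.exp (-x) * (1 / (σ / 4)) := by
            rw [intervalIntegral.integral_const_mul]
            gcongr
            exact exp_interval (σ / 4) (by positivity) R hR0.le
        _ = _ := by field_simp
    have b2 : ‖∫ y in (0:ℝ)..1, Gf σ m w p1 p2 q r x (R - Complex.I * y)‖ ≤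
        C1 * Real.exp (-(σ / 4) * R) := by
      have := intervalIntegral.norm_integral_le_of_norm_le_const (a := (0:ℝ)) (b := 1)
        (C := C1 * Real.exp (-(σ / 4) * R))
        (f := fun y : ℝ => Gf σ m w p1 p2 q r x (R - Complex.I * y)) ?_
      · simpa using this
      · intro y hy
        rw [Set.uIoc_of_le (by norm_num)] at hy
        have := H1 x (R - Complex.I * y) ?_ ?_ ?_ ?_
        · refine this.trans ?_
          simp only [Complex.sub_re, Complex.sub_im, Complex.ofReal_re, Complex.ofReal_im,
            Complex.mul_re, Complex.mul_im, Complex.I_re, Complex.I_im]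
          simp only [zero_mul, one_mul, mul_zero, sub_zero, zero_sub, zero_add]
          gcongr
          have : Real.exp (x * -y) ≤ 1 := by
            apply Real.exp_le_one_iff.2
            nlinarith [hy.1]
          nlinarith
        · have := Complex.abs_re_le_norm (R - Complex.I * y)
          simp [abs_of_pos hR0] at this
          linarith
        · simp; linarith
        · simp; exact hy.2
        · simp; exact hy.1.le
    have b3 : |(∫ y in (0:ℝ)..1, Gf σ m w p1 p2 q r x (-Complex.I * y)).im| ≤
        C2 * 132 * (Real.log x / x ^ 3) := by
      have hii : IntervalIntegrable (fun y : ℝ => Gf σ m w p1 p2 q r x (-Complex.I * y))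
          MeasureTheory.volume 0 1 := by
        apply ContinuousOn.intervalIntegrable
        apply (Gf_continuousOn σ m w p1 p2 q r x).comp (t := {z : ℂ | 0 ≤ z.re ∧ z.im ≤ 0})
        · fun_prop
        · intro y hy
          rw [Set.uIcc_of_le (by norm_num)] at hy
          simp
          exact hy.1
      have him : (∫ y in (0:ℝ)..1, Gf σ m w p1 p2 q r x (-Complex.I * y)).im =
          ∫ y in (0:ℝ)..1, (Gf σ m w p1 p2 q r x (-Complex.I * y)).im := by
        have := Complex.imCLM.intervalIntegral_comp_comm hii
        simpa using this.symm
      rw [him, ← Real.norm_eq_abs]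
      calc _ ≤ ∫ y in (0:ℝ)..1, C2 * (66 * (Real.log x / x ^ 2)) * Real.exp (-(x / 2) * y) := by
            apply intervalIntegral.norm_integral_le_of_norm_le (by norm_num)
            · refine Filter.Eventually.of_forall fun y hy => ?_
              refine (H2 x y hy.1 hy.2).trans ?_
              have := seg_pointwise x y hx hy.1
              have := mul_le_mul_of_nonneg_left this hC2.le
              linarith
            · apply Continuous.intervalIntegrable
              fun_prop
        _ ≤ C2 * (66 * (Real.log x / x ^ 2)) * (1 / (x / 2)) := by
            rw [intervalIntegral.integral_const_mul]
            gcongr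
            exact exp_interval (x / 2) (by positivity) 1 (by norm_num)
        _ = _ := by field_simp; ring
    rw [Complex.sub_re, Complex.add_re]
    have r1 := Complex.abs_re_le_norm (∫ t in (0:ℝ)..R, Gf σ m w p1 p2 q r x (t - Complex.I))
    have r2 := Complex.abs_re_le_norm
      (Complex.I * ∫ y in (0:ℝ)..1, Gf σ m w p1 p2 q r x (R - Complex.I * y))
    rw [norm_mul, Complex.norm_I, one_mul] at r2
    have r3 : (Complex.I * ∫ y in (0:ℝ)..1, Gf σ m w p1 p2 q r x (-Complex.I * y)).re =
      -(∫ y in (0:ℝ)..1, Gf σ m w p1 p2 q r x (-Complex.I * y)).im := by simp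
    rw [r3]
    rw [abs_le] at r1 r2 b3 ⊢
    constructor <;> linarith [r1.1, r1.2, r2.1, r2.2, b3.1, b3.2]

theorem Gf_conj (σ m w p1 p2 q r x t : ℝ) (ht : 0 < t) :
    (starRingEnd ℂ) (Gf σ m w p1 p2 q r x t) = Gf σ (-m) (-w) p1 (-p2) (-q) (-r) (-x) t := by
  have hk : zlz (t : ℂ) = ((t * Real.log t : ℝ) : ℂ) := by
    simp [zlz, Complex.ofReal_log ht.le]
  unfold Gf
  rw [hk, map_mul, ← Complex.exp_conj]
  simp only [map_add, map_sub, map_mul, map_neg, map_pow, Complex.conj_I, Complex.conj_ofReal]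
  push_cast
  ring_nf

theorem Gf_tail_both (σ m w p1 p2 q r : ℝ) (hσ : 0 < σ) :
    ∃ C > 0, ∀ x : ℝ, Real.exp 1 ≤ |x| →
      |(∫ t in Set.Ioi (0:ℝ), Gf σ m w p1 p2 q r x t).re| ≤ C * (|x| ^ (-3 : ℝ) * Real.log |x|) := by
  obtain ⟨C1, hC1, H1⟩ := Gf_tail σ m w p1 p2 q r hσ
  obtain ⟨C2, hC2, H2⟩ := Gf_tail σ (-m) (-w) p1 (-p2) (-q) (-r) hσ
  refine ⟨C1 + C2, by positivity, fun x hx => ?_⟩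
  have hx0 : 0 < |x| := (Real.exp_pos 1).trans_le hx
  have hlx : 1 ≤ Real.log |x| := by
    rw [Real.le_log_iff_exp_le hx0]; exact hx
  have e : |x| ^ (-3 : ℝ) * Real.log |x| = Real.log |x| / |x| ^ 3 := by
    rw [Real.rpow_neg hx0.le]
    norm_cast
    rw [div_eq_mul_inv, mul_comm]
  rw [e]
  have hp : 0 ≤ Real.log |x| / |x| ^ 3 := by positivity
  rcases le_total 0 x with h | h
  · rw [abs_of_nonneg h] at *
    have := H1 x hx
    nlinarith [mul_nonneg hC2.le hp]
  · rw [abs_of_nonpos h] at *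
    have := H2 (-x) hx
    have e2 : (∫ t in Set.Ioi (0:ℝ), Gf σ (-m) (-w) p1 (-p2) (-q) (-r) (-x) t) =
        (starRingEnd ℂ) (∫ t in Set.Ioi (0:ℝ), Gf σ m w p1 p2 q r x t) := by
      rw [← integral_conj]
      apply MeasureTheory.setIntegral_congr_fun measurableSet_Ioi
      intro t ht
      exact (Gf_conj σ m w p1 p2 q r x t ht).symm
    rw [e2, Complex.conj_re] at this
    nlinarith [mul_nonneg hC1.le hp]

theorem deriv_generic (Ψ Ψ1 Ψ2 : ℝ → ℝ → ℂ) (a b δ K : ℝ) (hδ : 0 < δ) (hK : 0 ≤ K)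
    (h1 : ∀ s ∈ Set.Ioo a b, ∀ t > 0, HasDerivAt (fun s => Ψ s t) (Ψ1 s t) s)
    (h2 : ∀ s ∈ Set.Ioo a b, ∀ t > 0, HasDerivAt (fun s => Ψ1 s t) (Ψ2 s t) s)
    (hre : ∀ s ∈ Set.Ioo a b, ∀ t > 0, (Ψ s t).re ≤ -δ * t)
    (hb1 : ∀ s ∈ Set.Ioo a b, ∀ t > 0, ‖Ψ1 s t‖ ≤ K * (1 + t) ^ 2)
    (hb2 : ∀ s ∈ Set.Ioo a b, ∀ t > 0, ‖Ψ2 s t‖ ≤ K * (1 + t) ^ 2)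
    (hc : ∀ s, Measurable (Ψ s)) (hc1 : ∀ s, Measurable (Ψ1 s)) (hc2 : ∀ s, Measurable (Ψ2 s))
    (g : ℝ → ℝ) (hg : ∀ s ∈ Set.Ioo a b,
      g s = (1 / Real.pi) * (∫ t in Set.Ioi (0:ℝ), Complex.exp (Ψ s t)).re)
    (s0 : ℝ) (hs0 : s0 ∈ Set.Ioo a b) :
    deriv (deriv g) s0 = (1 / Real.pi) *
      (∫ t in Set.Ioi (0:ℝ), Complex.exp (Ψ s0 t) * ((Ψ1 s0 t) ^ 2 + Ψ2 s0 t)).re := by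
  obtain ⟨C, hC, HC⟩ := one_add_pow_le_exp (δ / 2) (by positivity) 4
  have hbi : ∀ A : ℝ, MeasureTheory.IntegrableOn (fun t => A * Real.exp (-(δ / 2) * t)) (Set.Ioi 0) :=
    fun A => (integrableOn_exp_mul_Ioi (by linarith) 0).const_mul A
  have hexp : ∀ s ∈ Set.Ioo a b, ∀ t > 0, ‖Complex.exp (Ψ s t)‖ ≤ Real.exp (-δ * t) := by
    intro s hs t ht
    rw [Complex.norm_exp]
    exact Real.exp_le_exp.2 (hre s hs t ht)
  have hcomb : ∀ t > 0, Real.exp (-δ * t) * (1 + t) ^ 4 ≤ C * Real.exp (-(δ / 2) * t) := by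
    intro t ht
    calc _ ≤ Real.exp (-δ * t) * (C * Real.exp (δ / 2 * t)) := by gcongr; exact HC t ht.le
      _ = C * (Real.exp (-δ * t) * Real.exp (δ / 2 * t)) := by ring
      _ = _ := by rw [← Real.exp_add]; ring_nf
  have hpow : ∀ t : ℝ, t > 0 → (1 + t) ^ 2 ≤ (1 + t) ^ 4 := fun t ht =>
    pow_le_pow_right₀ (by linarith) (by norm_num)
  have B0 : ∀ s ∈ Set.Ioo a b, ∀ t > 0, ‖Complex.exp (Ψ s t)‖ ≤ C * Real.exp (-(δ / 2) * t) := by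
    intro s hs t ht
    refine (hexp s hs t ht).trans (le_trans ?_ (hcomb t ht))
    exact le_mul_of_one_le_right (Real.exp_pos _).le (one_le_pow₀ (by linarith))
  have B1 : ∀ s ∈ Set.Ioo a b, ∀ t > 0, ‖Complex.exp (Ψ s t) * Ψ1 s t‖ ≤
      K * C * Real.exp (-(δ / 2) * t) := by
    intro s hs t ht
    rw [norm_mul]
    calc _ ≤ Real.exp (-δ * t) * (K * (1 + t) ^ 4) := by
          gcongr
          · exact hexp s hs t ht
          · exact (hb1 s hs t ht).trans (mul_le_mul_of_nonneg_left (hpow t ht) hK)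
      _ = K * (Real.exp (-δ * t) * (1 + t) ^ 4) := by ring
      _ ≤ K * (C * Real.exp (-(δ / 2) * t)) :=
          mul_le_mul_of_nonneg_left (hcomb t ht) hK
      _ = _ := by ring
  have B2 : ∀ s ∈ Set.Ioo a b, ∀ t > 0, ‖Complex.exp (Ψ s t) * ((Ψ1 s t) ^ 2 + Ψ2 s t)‖ ≤
      (K ^ 2 + K) * C * Real.exp (-(δ / 2) * t) := by
    intro s hs t ht
    rw [norm_mul]
    calc _ ≤ Real.exp (-δ * t) * ((K ^ 2 + K) * (1 + t) ^ 4) := by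
          gcongr
          · exact hexp s hs t ht
          · refine (norm_add_le _ _).trans ?_
            rw [norm_pow]
            have e1 : ‖Ψ1 s t‖ ^ 2 ≤ (K * (1 + t) ^ 2) ^ 2 := by
              gcongr; exact hb1 s hs t ht
            have e2 : ‖Ψ2 s t‖ ≤ K * (1 + t) ^ 4 :=
              (hb2 s hs t ht).trans (mul_le_mul_of_nonneg_left (hpow t ht) hK)
            calc _ ≤ _ := add_le_add e1 e2
              _ = _ := by ring
      _ = (K ^ 2 + K) * (Real.exp (-δ * t) * (1 + t) ^ 4) := by ring
      _ ≤ (K ^ 2 + K) * (C * Real.exp (-(δ / 2) * t)) :=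
          mul_le_mul_of_nonneg_left (hcomb t ht) (by positivity)
      _ = _ := by ring
  have M0 : ∀ s, MeasureTheory.AEStronglyMeasurable (fun t => Complex.exp (Ψ s t))
      (MeasureTheory.volume.restrict (Set.Ioi 0)) := fun s =>
    (Complex.measurable_exp.comp (hc s)).aestronglyMeasurable
  have M1 : ∀ s, MeasureTheory.AEStronglyMeasurable (fun t => Complex.exp (Ψ s t) * Ψ1 s t)
      (MeasureTheory.volume.restrict (Set.Ioi 0)) := fun s =>
    ((Complex.measurable_exp.comp (hc s)).mul (hc1 s)).aestronglyMeasurable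
  have M2 : ∀ s, MeasureTheory.AEStronglyMeasurable
      (fun t => Complex.exp (Ψ s t) * ((Ψ1 s t) ^ 2 + Ψ2 s t))
      (MeasureTheory.volume.restrict (Set.Ioi 0)) := fun s =>
    ((Complex.measurable_exp.comp (hc s)).mul
      (((hc1 s).pow_const 2).add (hc2 s))).aestronglyMeasurable
  have ae : ∀ {p : ℝ → Prop}, (∀ t > 0, p t) →
      ∀ᵐ t ∂(MeasureTheory.volume.restrict (Set.Ioi (0:ℝ))), p t := by
    intro p hp
    exact (MeasureTheory.ae_restrict_mem measurableSet_Ioi).mono fun t ht => hp t ht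
  have D1 : ∀ s ∈ Set.Ioo a b, HasDerivAt (fun s => ∫ t in Set.Ioi (0:ℝ), Complex.exp (Ψ s t))
      (∫ t in Set.Ioi (0:ℝ), Complex.exp (Ψ s t) * Ψ1 s t) s := by
    intro s hs
    refine (hasDerivAt_integral_of_dominated_loc_of_deriv_le (Ioo_mem_nhds hs.1 hs.2)
      (Filter.Eventually.of_forall M0)
      ((hbi C).mono' (M0 s) (ae (B0 s hs)))
      (F' := fun s t => Complex.exp (Ψ s t) * Ψ1 s t) (M1 s)
      (ae fun t ht s hs => B1 s hs t ht) (hbi _) (ae fun t ht s hs => ?_)).2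
    exact (h1 s hs t ht).cexp
  have D2 : ∀ s ∈ Set.Ioo a b,
      HasDerivAt (fun s => ∫ t in Set.Ioi (0:ℝ), Complex.exp (Ψ s t) * Ψ1 s t)
      (∫ t in Set.Ioi (0:ℝ), Complex.exp (Ψ s t) * ((Ψ1 s t) ^ 2 + Ψ2 s t)) s := by
    intro s hs
    refine (hasDerivAt_integral_of_dominated_loc_of_deriv_le (Ioo_mem_nhds hs.1 hs.2)
      (Filter.Eventually.of_forall M1)
      ((hbi _).mono' (M1 s) (ae (B1 s hs)))
      (F' := fun s t => Complex.exp (Ψ s t) * ((Ψ1 s t) ^ 2 + Ψ2 s t)) (M2 s)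
      (ae fun t ht s hs => B2 s hs t ht) (hbi _) (ae fun t ht s hs => ?_)).2
    refine ((h1 s hs t ht).cexp.mul (h2 s hs t ht)).congr_deriv ?_
    ring
  have re_deriv : ∀ {F : ℝ → ℂ} {F' : ℂ} {s : ℝ}, HasDerivAt F F' s →
      HasDerivAt (fun s => (1 / Real.pi) * (F s).re) ((1 / Real.pi) * F'.re) s := by
    intro F F' s h
    have := (Complex.reCLM.hasFDerivAt.comp_hasDerivAt s h).const_mul (1 / Real.pi)
    exact this
  have G1 : ∀ s ∈ Set.Ioo a b, deriv g s =
      (1 / Real.pi) * (∫ t in Set.Ioi (0:ℝ), Complex.exp (Ψ s t) * Ψ1 s t).re := by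
    intro s hs
    apply HasDerivAt.deriv
    apply (re_deriv (D1 s hs)).congr_of_eventuallyEq
    filter_upwards [Ioo_mem_nhds hs.1 hs.2] with u hu
    exact hg u hu
  apply HasDerivAt.deriv
  apply (re_deriv (D2 s0 hs0)).congr_of_eventuallyEq
  filter_upwards [Ioo_mem_nhds hs0.1 hs0.2] with u hu
  exact G1 u hu

noncomputable def Psi (μ σ β x t : ℝ) : ℂ :=
  -(Complex.I * t * x) + (-(σ * t : ℝ) - Complex.I * ((2 * β / Real.pi * (σ * t) * Real.log (σ * t) : ℝ) : ℂ)
      + Complex.I * (μ * t : ℝ))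

theorem fM_eq (μ σ β x : ℝ) (hσ : 0 < σ) :
    fM ![μ, σ, 1, β] x = (1 / Real.pi) * (∫ t in Set.Ioi (0:ℝ), Complex.exp (Psi μ σ β x t)).re := by
  set F : ℝ → ℂ := fun t => Complex.exp (-Complex.I * (t : ℂ) * (x : ℂ)) * phiM ![μ, σ, 1, β] t
    with hF
  have hF1 : ∀ t, F t = Complex.exp (-(Complex.I * t * x) + (-(|σ * t| : ℝ) -
      Complex.I * ((2 * β / Real.pi * (σ * t) * Real.log |σ * t| : ℝ) : ℂ)
      + Complex.I * (μ * t : ℝ))) := by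
    intro t
    simp only [hF, phiM, psiM]
    rw [← Complex.exp_add]
    simp
  have hFpos : ∀ t > 0, F t = Complex.exp (Psi μ σ β x t) := by
    intro t ht
    rw [hF1, Psi, abs_of_pos (by positivity)]
  have hmeas : Measurable F := by
    have : F = _ := funext hF1
    rw [this]
    have : Measurable fun t : ℝ => |σ * t| := by fun_prop
    have : Measurable fun t : ℝ => Real.log |σ * t| := Real.measurable_log.comp this
    fun_prop
  have hnorm : ∀ t, ‖F t‖ = Real.exp (-σ * |t|) := by
    intro t
    rw [hF1, Complex.norm_exp]
    congr 1
    simp only [Complex.add_re, Complex.sub_re, Complex.neg_re, Complex.mul_re, Complex.I_re,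
      Complex.I_im, Complex.ofReal_re, Complex.ofReal_im, Complex.mul_im]
    rw [abs_mul, abs_of_pos hσ]
    ring
  have hpi : MeasureTheory.IntegrableOn F (Set.Ioi 0) := by
    refine (integrableOn_exp_mul_Ioi (a := -σ) (by linarith) 0).mono' hmeas.aestronglyMeasurable ?_
    refine (MeasureTheory.ae_restrict_mem measurableSet_Ioi).mono fun t ht => ?_
    rw [hnorm, abs_of_pos ht]
  have hni : MeasureTheory.IntegrableOn F (Set.Iic 0) := by
    refine (integrableOn_exp_mul_Iic (a := σ) hσ 0).mono' hmeas.aestronglyMeasurable ?_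
    refine (MeasureTheory.ae_restrict_mem measurableSet_Iic).mono fun t ht => ?_
    rw [hnorm, abs_of_nonpos ht]
    simp
  have hint : MeasureTheory.Integrable F := by
    rw [← MeasureTheory.integrableOn_univ, ← Set.Iic_union_Ioi (a := (0:ℝ))]
    exact hni.union hpi
  have hre : ∀ {ν : MeasureTheory.Measure ℝ}, MeasureTheory.Integrable F ν →
      (∫ t, F t ∂ν).re = ∫ t, (F t).re ∂ν := by
    intro ν h
    exact (integral_re h).symm
  have hsymm : ∀ t, (F t).re = (F |t|).re := by
    intro t
    rcases le_total 0 t with h | h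
    · rw [abs_of_nonneg h]
    · rw [abs_of_nonpos h]
      rw [← Complex.conj_re]
      congr 1
      rw [hF1, hF1, ← Complex.exp_conj]
      congr 1
      simp only [map_add, map_sub, map_mul, map_neg, Complex.conj_I, Complex.conj_ofReal]
      rw [mul_neg, abs_neg]
      push_cast
      ring
  have : fM ![μ, σ, 1, β] x = (1 / (2 * Real.pi)) * (∫ t, F t).re := rfl
  rw [this, hre hint]
  have e : ∫ t, (F t).re = ∫ t, (fun t => (F t).re) |t| := by
    congr 1; funext t; exact hsymm t
  rw [e, integral_comp_abs (f := fun t => (F t).re), ← hre hpi, MeasureTheory.setIntegral_congr_fun measurableSet_Ioi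
    (fun t ht => hFpos t ht)]
  field_simp

theorem t_log_bound (c d s t : ℝ) (hc : 0 < c) (hcs : c ≤ s) (hsd : s ≤ d) (ht : 0 < t) :
    |t * Real.log (s * t)| ≤ (d + 1 / c) * (1 + t) ^ 2 := by
  have hs : 0 < s := by linarith
  have hv0 : 0 < s * t := by positivity
  have hlv : |Real.log (s * t)| ≤ (s * t) + (s * t)⁻¹ := by
    have h1 := Real.log_le_sub_one_of_pos hv0
    have h2 := Real.log_le_sub_one_of_pos (inv_pos.2 hv0)
    rw [Real.log_inv] at h2
    have h3 : 0 < (s * t)⁻¹ := inv_pos.2 hv0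
    rw [abs_le]; constructor <;> linarith
  rw [abs_mul, abs_of_pos ht]
  calc t * |Real.log (s * t)| ≤ t * ((s * t) + (s * t)⁻¹) := by gcongr
    _ = s * t ^ 2 + 1 / s := by field_simp
    _ ≤ d * t ^ 2 + 1 / c := by gcongr
    _ ≤ d * (1 + t) ^ 2 + 1 / c * (1 + t) ^ 2 := by
        gcongr
        · linarith
        · linarith
        · exact le_mul_of_one_le_right (by positivity) (one_le_pow₀ (by linarith))
    _ = _ := by ring

theorem Psi_measurable (μ σ β x : ℝ) : Measurable (Psi μ σ β x) := by
  unfold Psi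
  fun_prop

theorem Psi_re (μ σ β x t : ℝ) : (Psi μ σ β x t).re = -σ * t := by
  simp only [Psi, Complex.add_re, Complex.sub_re, Complex.neg_re, Complex.mul_re, Complex.I_re,
      Complex.I_im, Complex.ofReal_re, Complex.ofReal_im, Complex.mul_im]
  ring

theorem sigma_deriv (μ σ β x : ℝ) (hσ : 0 < σ) :
    fPP 1 1 ![μ, σ, 1, β] x = (1 / Real.pi) * (∫ t in Set.Ioi (0:ℝ),
      Complex.exp (Psi μ σ β x t) *
        ((-(t:ℂ) - Complex.I * ((2 * β / Real.pi * (t * Real.log (σ * t) + t) : ℝ) : ℂ)) ^ 2 +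
         -Complex.I * ((2 * β / Real.pi * (t / σ) : ℝ) : ℂ))).re := by
  have e : fPP 1 1 ![μ, σ, 1, β] x = deriv (deriv (fun s => fM ![μ, s, 1, β] x)) σ := by
    simp only [fPP, fP, Function.update_idem]
    have : ∀ s, Function.update ![μ, σ, 1, β] 1 s = ![μ, s, 1, β] := by
      intro s; ext i; fin_cases i <;> simp
    simp [this]
  rw [e]
  set b := 2 * β / Real.pi with hb
  set L := 2 * σ + 1 / (σ / 2) with hL
  have hL0 : 0 < L := by positivity
  refine deriv_generic (fun s t => Psi μ s β x t)
    (fun s t => -(t:ℂ) - Complex.I * ((b * (t * Real.log (s * t) + t) : ℝ) : ℂ))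
    (fun s t => -Complex.I * ((b * (t / s) : ℝ) : ℂ)) (σ / 2) (2 * σ) (σ / 2)
    (1 + |b| * (L + 1) + |b| * (1 / (σ / 2))) (by positivity) (by positivity)
    ?_ ?_ ?_ ?_ ?_ ?_ ?_ ?_ _ ?_ σ ⟨by linarith, by linarith⟩
  · intro s hs t ht
    have hs0 : 0 < s := by linarith [hs.1]
    have k1 : HasDerivAt (fun s : ℝ => s * t) t s := by
      simpa using (hasDerivAt_id s).mul_const t
    have k2 : HasDerivAt (fun s : ℝ => b * (s * t) * Real.log (s * t))
        (b * (t * Real.log (s * t) + t)) s := by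
      have := (k1.const_mul b).mul (k1.log (by positivity))
      refine this.congr_deriv ?_
      field_simp
    have := (((k1.ofReal_comp.neg).sub (k2.ofReal_comp.const_mul Complex.I)).add_const
      (Complex.I * ((μ * t : ℝ) : ℂ))).const_add (-(Complex.I * t * x))
    exact this
  · intro s hs t ht
    have hs0 : 0 < s := by linarith [hs.1]
    have k1 : HasDerivAt (fun s : ℝ => s * t) t s := by
      simpa using (hasDerivAt_id s).mul_const t
    have k2 : HasDerivAt (fun s : ℝ => b * (t * Real.log (s * t) + t)) (b * (t / s)) s := by
      have := (((k1.log (by positivity)).const_mul t).add_const t).const_mul b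
      refine this.congr_deriv ?_
      field_simp
    have := (k2.ofReal_comp.const_mul Complex.I).const_sub (-(t:ℂ))
    refine this.congr_deriv ?_
    ring
  · intro s hs t ht
    rw [Psi_re]
    nlinarith [hs.1]
  · intro s hs t ht
    have hl := t_log_bound (σ / 2) (2 * σ) s t (by positivity) hs.1.le hs.2.le ht
    have h1 : 1 ≤ 1 + t := by linarith
    have h2 : t ≤ (1 + t) ^ 2 := by nlinarith
    calc _ ≤ t + |b| * ((L * (1 + t) ^ 2) + (1 + t) ^ 2) := by
          refine (norm_sub_le _ _).trans ?_
          rw [norm_neg, norm_mul, Complex.norm_I, one_mul, Complex.norm_real, Complex.norm_real,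
            Real.norm_eq_abs, Real.norm_eq_abs, abs_of_pos ht, abs_mul]
          gcongr
          refine (abs_add_le _ _).trans ?_
          rw [abs_of_pos ht]
          gcongr
      _ ≤ (1 + t) ^ 2 + |b| * ((L * (1 + t) ^ 2) + (1 + t) ^ 2) + |b| * (1 / (σ / 2)) * (1 + t) ^ 2 := by
          have : 0 ≤ |b| * (1 / (σ / 2)) * (1 + t) ^ 2 := by positivity
          linarith
      _ = _ := by ring
  · intro s hs t ht
    have hs0 : 0 < s := by linarith [hs.1]
    have h2 : t ≤ (1 + t) ^ 2 := by nlinarith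
    rw [norm_mul, norm_neg, Complex.norm_I, one_mul, Complex.norm_real, Real.norm_eq_abs, abs_mul,
      abs_of_pos (by positivity : 0 < t / s)]
    calc |b| * (t / s) ≤ |b| * ((1 + t) ^ 2 / (σ / 2)) := by
          gcongr
          exact hs.1.le
      _ = |b| * (1 / (σ / 2)) * (1 + t) ^ 2 := by ring
      _ ≤ _ := by
          apply mul_le_mul_of_nonneg_right _ (by positivity)
          have : 0 ≤ 1 + |b| * (L + 1) := by positivity
          linarith
  · intro s; exact Psi_measurable _ _ _ _
  · intro s; fun_prop
  · intro s; fun_prop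
  · intro s hs
    exact fM_eq μ s β x (by linarith [hs.1])

theorem beta_deriv (μ σ β x : ℝ) (hσ : 0 < σ) :
    fPP 3 3 ![μ, σ, 1, β] x = (1 / Real.pi) * (∫ t in Set.Ioi (0:ℝ),
      Complex.exp (Psi μ σ β x t) *
        ((-Complex.I * ((2 / Real.pi * σ * (t * Real.log (σ * t)) : ℝ) : ℂ)) ^ 2 + 0)).re := by
  have e : fPP 3 3 ![μ, σ, 1, β] x = deriv (deriv (fun s => fM ![μ, σ, 1, s] x)) β := by
    simp only [fPP, fP, Function.update_idem]
    have : ∀ s, Function.update ![μ, σ, 1, β] 3 s = ![μ, σ, 1, s] := by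
      intro s; ext i; fin_cases i <;> simp
    simp [this]
  rw [e]
  set L := σ + 1 / σ with hL
  have hL0 : 0 < L := by positivity
  have hpi := Real.pi_pos
  refine deriv_generic (fun s t => Psi μ σ s x t)
    (fun s t => -Complex.I * ((2 / Real.pi * σ * (t * Real.log (σ * t)) : ℝ) : ℂ))
    (fun s t => 0) (β - 1) (β + 1) σ
    (2 / Real.pi * σ * L) hσ (by positivity)
    ?_ ?_ ?_ ?_ ?_ ?_ ?_ ?_ _ ?_ β ⟨by linarith, by linarith⟩
  · intro s hs t ht
    have k2 : HasDerivAt (fun s : ℝ => 2 * s / Real.pi * (σ * t) * Real.log (σ * t))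
        (2 / Real.pi * σ * (t * Real.log (σ * t))) s := by
      have := (((((hasDerivAt_id s).const_mul 2).div_const Real.pi).mul_const (σ * t)).mul_const
        (Real.log (σ * t)))
      refine this.congr_deriv ?_
      ring
    have := (((k2.ofReal_comp.const_mul Complex.I).const_sub (-((σ * t : ℝ):ℂ))).add_const
      (Complex.I * ((μ * t : ℝ) : ℂ))).const_add (-(Complex.I * t * x))
    refine this.congr_deriv ?_
    ring
  · intro s hs t ht
    exact hasDerivAt_const _ _
  · intro s hs t ht
    rw [Psi_re]
  · intro s hs t ht
    have hl := t_log_bound σ σ σ t (by positivity) le_rfl le_rfl ht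
    rw [norm_mul, norm_neg, Complex.norm_I, one_mul, Complex.norm_real, Real.norm_eq_abs, abs_mul,
      abs_of_pos (by positivity : 0 < 2 / Real.pi * σ), mul_assoc _ L]
    gcongr
  · intro s hs t ht
    simp; positivity
  · intro s; exact Psi_measurable _ _ _ _
  · intro s; fun_prop
  · intro s; fun_prop
  · intro s hs
    exact fM_eq μ σ s x hσ

theorem final_aux (h : ℝ → ℝ) (σ m w p1 p2 q r : ℝ) (hσ : 0 < σ)
    (hh : ∀ x, h x = (1 / Real.pi) * (∫ t in Set.Ioi (0:ℝ), Gf σ m w p1 p2 q r x t).re) :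
    IsBigOAtInfty h (fun x => |x| ^ (-3 : ℝ) * Real.log |x|) := by
  obtain ⟨C, hC, H⟩ := Gf_tail_both σ m w p1 p2 q r hσ
  have hpi := Real.pi_pos
  refine ⟨1 / Real.pi * C, by positivity, Real.exp 1, Real.exp_pos 1, fun x hx => ?_⟩
  rw [hh, abs_mul, abs_of_pos (by positivity : 0 < 1 / Real.pi), mul_assoc]
  gcongr
  exact H x hx

/-- At `α = 1`, `β ∈ (-1,1)`, improved tail bounds hold:
`f_{σσ} = O(|x|⁻³ log|x|)` and `f_{ββ} = O(|x|⁻³ log|x|)`. -/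
theorem density_second_deriv_tail_bounds_alpha_one
    (μ σ β : ℝ) (hσ : 0 < σ) (hβ : β ∈ Set.Ioo (-1 : ℝ) 1) :
    IsBigOAtInfty (fPP 1 1 ![μ, σ, 1, β]) (fun x => |x| ^ (-3 : ℝ) * Real.log |x|) ∧
    IsBigOAtInfty (fPP 3 3 ![μ, σ, 1, β]) (fun x => |x| ^ (-3 : ℝ) * Real.log |x|) := by
  have hk : ∀ t : ℝ, 0 < t → zlz (t : ℂ) = ((t * Real.log t : ℝ) : ℂ) := by
    intro t ht
    simp [zlz, Complex.ofReal_log ht.le]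
  constructor
  · refine final_aux _ σ (μ - 2 * β / Real.pi * σ * Real.log σ) (2 * β / Real.pi * σ) 1
      (2 * β / Real.pi + 2 * β / Real.pi * Real.log σ) (2 * β / Real.pi) (-(2 * β / Real.pi) / σ)
      hσ fun x => ?_
    rw [sigma_deriv μ σ β x hσ]
    congr 2
    apply MeasureTheory.setIntegral_congr_fun measurableSet_Ioi
    intro t ht
    have ht : 0 < t := ht
    simp only [Gf]
    rw [hk t ht, Psi, Real.log_mul hσ.ne' ht.ne']
    have hσc : (σ : ℂ) ≠ 0 := by exact_mod_cast hσ.ne'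
    congr 1
    · congr 1
      push_cast
      ring
    · push_cast
      ring
  · refine final_aux _ σ (μ - 2 * β / Real.pi * σ * Real.log σ) (2 * β / Real.pi * σ) 0
      (-(2 / Real.pi * σ * Real.log σ)) (-(2 / Real.pi * σ)) 0
      hσ fun x => ?_
    rw [beta_deriv μ σ β x hσ]
    congr 2
    apply MeasureTheory.setIntegral_congr_fun measurableSet_Ioi
    intro t ht
    have ht : 0 < t := ht
    simp only [Gf]
    rw [hk t ht, Psi, Real.log_mul hσ.ne' ht.ne']
    congr 1
    · congr 1
      push_cast
      ring
    · push_cast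
      ring
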